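/- Let (X, Y) be a complete hereditary cotorsion pair in an abelian category A such that Y is closed under kernels of epimorphisms. Then (G(X) ∩ Y, X ∩ Y) is a strong left Frobenius pair in A. -/

import Mathlib

/-!
Put `W = X ∩ Y`. Dimension shifting along the complex defining an object of `G(X)` shows that all
its cycles are left orthogonal to `W`. Conversely, the left half of such a complex can always be
built from presentations by objects of `X`, so `G(X)` is the largest class of objects left
orthogonal to `W` whose members embed in objects of `X` with cokernel again in the class. Closure
properties of `G(X)` can thus be proved coinductively, by exhibiting a class with this property.

The construction used throughout is the pushout of two monomorphisms `A ↪ B` and `A ↪ A'`, which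
extends `B / A` by `A'` and `A' / A` by `B`. It shows that an extension of an object of `X` by an
object of `G(X)` is in `G(X)`. For an extension `0 → A → B → D → 0` of objects of `G(X)`, embed `A`
in some `I ∈ W`: the pushout extends `D` by `I`, so it splits and is also an extension of `I` by
`D`, hence in `G(X)`, and `B` embeds in it with cokernel `I / A` in `G(X)`.

For `M ∈ G(X) ∩ Y`, the cokernel of an embedding of `M` in an object of `W` is in `Y` because the
pair is hereditary, and an `X`-approximation of `M` with kernel in `Y` is in `W` because `Y` is
closed under extensions.
-/

open CategoryTheory CategoryTheory.Limits CategoryTheory.Abelian ZeroObject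

universe w v u

namespace FrobeniusPaper

variable {C : Type u} [Category.{v} C] [Abelian C]

/-- `f, g` form a short exact sequence `0 → A → B → D → 0` in the abelian category `C`. -/
def IsSES {A B D : C} (f : A ⟶ B) (g : B ⟶ D) : Prop :=
  ∃ w : f ≫ g = 0, (ShortComplex.mk f g w).ShortExact

/-- A "subcategory" in the sense of the paper: a full additive subcategory, regarded as the
predicate of membership for its objects, closed under isomorphisms and direct summands. -/
structure IsSubcat (X : C → Prop) : Prop where
  zero : X 0
  iso_closed : ∀ {A B : C}, (A ≅ B) → X A → X B
  biprod_closed : ∀ {A B : C}, X A → X B → X (A ⊞ B)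
  summand_closed : ∀ {A M : C} (i : A ⟶ M) (p : M ⟶ A), i ≫ p = 𝟙 A → X M → X A

/-- `Hat X n M` means `M ∈ X̂ₙ`, i.e. there is an exact sequence
`0 → Xₙ → ⋯ → X₁ → X₀ → M → 0` with all `Xᵢ ∈ X`. -/
def Hat (X : C → Prop) : ℕ → C → Prop
  | 0, M => X M
  | (n + 1), M => ∃ (K E : C) (f : K ⟶ E) (g : E ⟶ M), IsSES f g ∧ X E ∧ Hat X n K

/-- `M ∈ X̂ = ⋃ₙ X̂ₙ`. -/
def HatAll (X : C → Prop) (M : C) : Prop := ∃ n, Hat X n M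

/-- `W` is a cogenerator for `X`. -/
def IsCogenerator (W X : C → Prop) : Prop :=
  (∀ M, W M → X M) ∧
    ∀ M, X M → ∃ (W₀ X' : C) (f : M ⟶ W₀) (g : W₀ ⟶ X'), IsSES f g ∧ W W₀ ∧ X X'

/-- `W` is a generator for `X`. -/
def IsGenerator (W X : C → Prop) : Prop :=
  (∀ M, W M → X M) ∧
    ∀ M, X M → ∃ (X' W₀ : C) (f : X' ⟶ W₀) (g : W₀ ⟶ M), IsSES f g ∧ W W₀ ∧ X X'

/-- `X` is closed under extensions. -/
def ExtClosed (X : C → Prop) : Prop :=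
  ∀ ⦃A B D : C⦄ (f : A ⟶ B) (g : B ⟶ D), IsSES f g → X A → X D → X B

/-- `X` is closed under kernels of epimorphisms. -/
def KerEpiClosed (X : C → Prop) : Prop :=
  ∀ ⦃A B D : C⦄ (f : A ⟶ B) (g : B ⟶ D), IsSES f g → X B → X D → X A

/-- A thick subcategory: closed under direct summands and two-out-of-three for
short exact sequences. -/
def IsThickSub (T : C → Prop) : Prop :=
  IsSubcat T ∧ ∀ ⦃A B D : C⦄ (f : A ⟶ B) (g : B ⟶ D), IsSES f g →
    (T A → T B → T D) ∧ (T A → T D → T B) ∧ (T B → T D → T A)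

/-- Membership in `Thick(X)`, the smallest thick subcategory containing `X`. -/
def thickClosure (X : C → Prop) (M : C) : Prop :=
  ∀ T : C → Prop, IsThickSub T → (∀ N, X N → T N) → T M

variable [HasExt.{w} C]

/-- `Y ∈ X^⊥`, i.e. `Extⁱ(M, Y) = 0` for all `i ≥ 1` and `M ∈ X`. -/
def rightPerp (X : C → Prop) (Y : C) : Prop :=
  ∀ M, X M → ∀ i : ℕ, 1 ≤ i → Subsingleton (Abelian.Ext M Y i)

/-- A left Frobenius pair `(X, W)`. -/
structure LeftFrobenius (X W : C → Prop) : Prop where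
  subX : IsSubcat X
  subW : IsSubcat W
  extClosed : ExtClosed X
  kerEpiClosed : KerEpiClosed X
  cogen : IsCogenerator W X
  perp : ∀ M, W M → rightPerp X M

/-- A strong left Frobenius pair `(X, W)`. -/
structure StrongLeftFrobenius (X W : C → Prop) extends LeftFrobenius X W : Prop where
  gen : IsGenerator W X
  proj : ∀ M N, W M → X N → ∀ i : ℕ, 1 ≤ i → Subsingleton (Abelian.Ext M N i)

/-- A cotorsion pair `(U, V)` on an extension-closed subcategory `B` of `C`. -/
structure CotorsionPairOn (B U V : C → Prop) : Prop where
  subU : ∀ M, U M → B M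
  subV : ∀ M, V M → B M
  isoU : ∀ {A B' : C}, (A ≅ B') → U A → U B'
  summandU : ∀ {A M : C} (i : A ⟶ M) (p : M ⟶ A), i ≫ p = 𝟙 A → U M → U A
  isoV : ∀ {A B' : C}, (A ≅ B') → V A → V B'
  summandV : ∀ {A M : C} (i : A ⟶ M) (p : M ⟶ A), i ≫ p = 𝟙 A → V M → V A
  ext1 : ∀ M N, U M → V N → Subsingleton (Abelian.Ext M N 1)
  res : ∀ M, B M → ∃ (V₀ U₀ : C) (f : V₀ ⟶ U₀) (g : U₀ ⟶ M), IsSES f g ∧ U U₀ ∧ V V₀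
  cores : ∀ M, B M → ∃ (V₀ U₀ : C) (f : M ⟶ V₀) (g : V₀ ⟶ U₀), IsSES f g ∧ U U₀ ∧ V V₀

/-- `GClass X W M`: there exists a doubly infinite exact sequence
`⋯ → P₋₁ → P₀ → P₁ → ⋯` with all terms in `X`, with `M ≅ Ker(P₀ → P₁)`, and such that the
complex `Hom(P, Q)` is exact for every `Q ∈ W`. -/
def GClass (X W : C → Prop) (M : C) : Prop :=
  ∃ (P : ℤ → C) (d : ∀ n : ℤ, P n ⟶ P (n + 1)) (hd : ∀ n, d n ≫ d (n + 1) = 0),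
    (∀ n, X (P n)) ∧
    (∀ n, (ShortComplex.mk (d n) (d (n + 1)) (hd n)).Exact) ∧
    Nonempty (M ≅ kernel (d 0)) ∧
    (∀ Q : C, W Q → ∀ (n : ℤ) (ψ : P (n + 1) ⟶ Q), d n ≫ ψ = 0 →
      ∃ φ : P (n + 1 + 1) ⟶ Q, d (n + 1) ≫ φ = ψ)

/-! ### Short exact sequences and pushouts -/

section ShortExact

omit [HasExt.{w} C]

lemma IsSES.zero {A B D : C} {f : A ⟶ B} {g : B ⟶ D} (h : IsSES f g) : f ≫ g = 0 := h.1

lemma IsSES.mono {A B D : C} {f : A ⟶ B} {g : B ⟶ D} (h : IsSES f g) : Mono f := h.2.mono_f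

lemma IsSES.epi {A B D : C} {f : A ⟶ B} {g : B ⟶ D} (h : IsSES f g) : Epi g := h.2.epi_g

lemma IsSES.exists_desc {A B D T : C} {f : A ⟶ B} {g : B ⟶ D} (h : IsSES f g) (x : B ⟶ T)
    (hx : f ≫ x = 0) : ∃ y : D ⟶ T, g ≫ y = x := by
  have := h.epi
  exact h.2.exact.desc' x hx

lemma isSES_cokernel {A B : C} (f : A ⟶ B) [Mono f] : IsSES f (cokernel.π f) :=
  ⟨cokernel.condition f, .mk' (ShortComplex.exact_cokernel f) ‹_› inferInstance⟩

lemma isSES_kernel_lift {A B D : C} {f : A ⟶ B} {g : B ⟶ D} (w : f ≫ g = 0)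
    (h : (ShortComplex.mk f g w).Exact) : IsSES (kernel.ι f) (kernel.lift g f w) := by
  have hw : kernel.ι f ≫ kernel.lift g f w = 0 := by
    simp [← cancel_mono (kernel.ι g)]
  have hex : (ShortComplex.mk (kernel.ι f) f (kernel.condition f)).Exact :=
    ShortComplex.exact_kernel f
  let φ : ShortComplex.mk (kernel.ι f) (kernel.lift g f w) hw ⟶
      ShortComplex.mk (kernel.ι f) f (kernel.condition f) :=
    { τ₁ := 𝟙 _, τ₂ := 𝟙 _, τ₃ := kernel.ι g }
  exact ⟨hw, .mk' ((ShortComplex.exact_iff_of_epi_of_isIso_of_mono φ).2 hex) inferInstance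
    ((ShortComplex.exact_iff_epi_kernel_lift _).1 h)⟩

lemma IsSES.of_iso_left {A A' B D : C} {f : A ⟶ B} {g : B ⟶ D} (h : IsSES f g) (e : A' ≅ A) :
    IsSES (e.hom ≫ f) g := by
  have w : (e.hom ≫ f) ≫ g = 0 := by rw [Category.assoc, h.zero, comp_zero]
  let φ : ShortComplex.mk f g h.zero ≅ ShortComplex.mk (e.hom ≫ f) g w :=
    ShortComplex.isoMk e.symm (Iso.refl _) (Iso.refl _)
  exact ⟨w, ShortComplex.shortExact_of_iso φ h.2⟩

lemma isSES_biprod (A B : C) : IsSES (biprod.inl : A ⟶ A ⊞ B) biprod.snd :=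
  ⟨biprod.inl_snd, (ShortComplex.Splitting.ofHasBinaryBiproduct A B).shortExact⟩

lemma IsSES.exists_swap_of_retraction {A B D : C} {f : A ⟶ B} {g : B ⟶ D} (h : IsSES f g)
    (r : B ⟶ A) (hr : f ≫ r = 𝟙 A) : ∃ s : D ⟶ B, IsSES s r ∧ s ≫ g = 𝟙 D := by
  let σ := ShortComplex.Splitting.ofExactOfRetraction _ h.2.exact r hr h.epi
  let τ : (ShortComplex.mk σ.s σ.r σ.s_r).Splitting :=
    { r := g, s := f, f_r := σ.s_g, s_g := σ.f_r, id := (add_comm _ _).trans σ.id }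
  exact ⟨σ.s, ⟨σ.s_r, τ.shortExact⟩, σ.s_g⟩

lemma isSES_iff_isPushout {A B D : C} {f : A ⟶ B} {g : B ⟶ D} [Mono f] :
    IsSES f g ↔ IsPushout f (0 : A ⟶ 0) g 0 := by
  constructor
  · intro h
    have := h.epi
    refine ⟨⟨by simp [h.zero]⟩, ⟨PushoutCocone.isColimitAux' _ fun s => ?_⟩⟩
    have hs : f ≫ s.inl = 0 := by simp [s.condition]
    exact ⟨h.2.exact.desc s.inl hs, h.2.exact.g_desc s.inl hs, (isZero_zero C).eq_of_src _ _,
      fun {m} hm _ => (cancel_epi g).1 (hm.trans (h.2.exact.g_desc s.inl hs).symm)⟩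
  · intro sq
    have w : f ≫ g = 0 := by simp [sq.w]
    let hg : IsColimit (CokernelCofork.ofπ g w) := CokernelCofork.IsColimit.ofπ _ _
      (fun x hx => sq.desc x 0 (by simp [hx])) (fun x hx => sq.inl_desc _ _ _)
      (fun x hx y hy => sq.hom_ext (by simp [hy]) (by simp))
    exact ⟨w, .mk' (ShortComplex.exact_of_g_is_cokernel _ hg) ‹_›
      (Cofork.IsColimit.epi hg)⟩

lemma IsSES.cobaseChange {A B D A' P : C} {f : A ⟶ B} {g : B ⟶ D} {h : A ⟶ A'}
    {i : B ⟶ P} {j : A' ⟶ P} (hf : IsSES f g) (sq : IsPushout f h i j) :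
    ∃ q : P ⟶ D, IsSES j q := by
  have := hf.mono
  have : Mono j := (MorphismProperty.monomorphisms C).of_isPushout sq.flip ‹Mono f›
  have hw : f ≫ g = h ≫ (0 : A' ⟶ D) := by rw [hf.zero, comp_zero]
  refine ⟨sq.desc g 0 hw, isSES_iff_isPushout.2 (.of_top ?_ (by simp) sq)⟩
  simpa using isSES_iff_isPushout.1 hf

/-- The cokernel of `A ↪ B ↪ M` is obtained by pushing out `B ↪ M` along `B ↠ B / A`. -/
lemma IsSES.exists_comp {A B D M F : C} {f : A ⟶ B} {p : B ⟶ D} {g : B ⟶ M} {q : M ⟶ F}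
    (h₁ : IsSES f p) (h₂ : IsSES g q) :
    ∃ (K : C) (r : M ⟶ K) (s : D ⟶ K) (t : K ⟶ F), IsSES (f ≫ g) r ∧ IsSES s t := by
  have := h₁.mono
  have := h₂.mono
  have sq := IsPushout.of_hasPushout g p
  obtain ⟨t, ht⟩ := h₂.cobaseChange sq
  refine ⟨_, pushout.inl g p, pushout.inr g p, t, isSES_iff_isPushout.2 ?_, ht⟩
  simpa using (isSES_iff_isPushout.1 h₁).paste_horiz sq

lemma exact_splice {P A B D Q : C} {e : P ⟶ A} {f : A ⟶ B} {g : B ⟶ D} {m : D ⟶ Q}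
    (h : IsSES f g) [Epi e] [Mono m] (w : (e ≫ f) ≫ g ≫ m = 0) :
    (ShortComplex.mk (e ≫ f) (g ≫ m) w).Exact := by
  have w' : f ≫ g ≫ m = 0 := by rw [← Category.assoc, h.zero, zero_comp]
  let φ : ShortComplex.mk f g h.zero ⟶ ShortComplex.mk f (g ≫ m) w' :=
    { τ₁ := 𝟙 _, τ₂ := 𝟙 _, τ₃ := m }
  let ψ : ShortComplex.mk (e ≫ f) (g ≫ m) w ⟶ ShortComplex.mk f (g ≫ m) w' :=
    { τ₁ := e, τ₂ := 𝟙 _, τ₃ := 𝟙 _ }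
  exact (ShortComplex.exact_iff_of_epi_of_isIso_of_mono ψ).2
    ((ShortComplex.exact_iff_of_epi_of_isIso_of_mono φ).1 h.2.exact)

lemma isSubcat_of_extClosed {X : C → Prop} (hX : ∃ M, X M) (hext : ExtClosed X)
    (hret : ∀ {A M : C}, Retract A M → X M → X A) : IsSubcat X where
  zero := by
    obtain ⟨M, hM⟩ := hX
    exact hret ⟨0, 0, by simp⟩ hM
  iso_closed e hA := hret e.symm.retract hA
  biprod_closed hA hB := hext _ _ (isSES_biprod _ _) hA hB
  summand_closed i p hip hM := hret ⟨i, p, hip⟩ hM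

lemma ExtClosed.inf {X Y : C → Prop} (hX : ExtClosed X) (hY : ExtClosed Y) : ExtClosed (X ⊓ Y) :=
  fun _ _ _ f g h hA hD => ⟨hX f g h hA.1 hD.1, hY f g h hA.2 hD.2⟩

lemma KerEpiClosed.inf {X Y : C → Prop} (hX : KerEpiClosed X) (hY : KerEpiClosed Y) :
    KerEpiClosed (X ⊓ Y) :=
  fun _ _ _ f g h hB hD => ⟨hX f g h hB.1 hD.1, hY f g h hB.2 hD.2⟩

end ShortExact

/-! ### Vanishing of `Ext` -/

section Ext

lemma subsingleton_ext_of_retract_left {M N Q : C} (r : Retract M N) {n : ℕ}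
    (h : Subsingleton (Ext N Q n)) : Subsingleton (Ext M Q n) := by
  refine subsingleton_of_forall_eq 0 fun x => ?_
  have hx : (Ext.mk₀ r.r).comp x (zero_add n) = 0 := Subsingleton.elim _ _
  rw [← Ext.mk₀_id_comp x, ← r.retract, ← Ext.mk₀_comp_mk₀_assoc, hx, Ext.comp_zero]

lemma subsingleton_ext_of_retract_right {M N Q : C} (r : Retract M N) {n : ℕ}
    (h : Subsingleton (Ext Q N n)) : Subsingleton (Ext Q M n) := by
  refine subsingleton_of_forall_eq 0 fun x => ?_
  have hx : x.comp (Ext.mk₀ r.i) (add_zero n) = 0 := Subsingleton.elim _ _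
  rw [← Ext.comp_mk₀_id x, ← r.retract, ← Ext.mk₀_comp_mk₀, ← Ext.comp_assoc_of_second_deg_zero,
    hx, Ext.zero_comp]

variable {A B D Q : C} {f : A ⟶ B} {g : B ⟶ D} {n : ℕ}

lemma IsSES.subsingleton_ext_contravariant₁ (h : IsSES f g) (hB : Subsingleton (Ext B Q n))
    (hD : Subsingleton (Ext D Q (n + 1))) : Subsingleton (Ext A Q n) := by
  refine subsingleton_of_forall_eq 0 fun x => ?_
  obtain ⟨y, rfl⟩ :=
    Ext.contravariant_sequence_exact₁ h.2 Q x (add_comm 1 n) (Subsingleton.elim _ _)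
  rw [Subsingleton.elim y 0, Ext.comp_zero]

lemma IsSES.subsingleton_ext_contravariant₂ (h : IsSES f g) (hA : Subsingleton (Ext A Q n))
    (hD : Subsingleton (Ext D Q n)) : Subsingleton (Ext B Q n) := by
  refine subsingleton_of_forall_eq 0 fun x => ?_
  obtain ⟨y, rfl⟩ := Ext.contravariant_sequence_exact₂ h.2 Q x (Subsingleton.elim _ _)
  rw [Subsingleton.elim y 0, Ext.comp_zero]

lemma IsSES.subsingleton_ext_contravariant₃ (h : IsSES f g) (hA : Subsingleton (Ext A Q n))
    (hB : Subsingleton (Ext B Q (n + 1))) : Subsingleton (Ext D Q (n + 1)) := by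
  refine subsingleton_of_forall_eq 0 fun x => ?_
  obtain ⟨y, rfl⟩ :=
    Ext.contravariant_sequence_exact₃ h.2 Q x (Subsingleton.elim _ _) (add_comm 1 n)
  rw [Subsingleton.elim y 0, Ext.comp_zero]

lemma IsSES.subsingleton_ext_covariant₂ (h : IsSES f g) (hA : Subsingleton (Ext Q A n))
    (hD : Subsingleton (Ext Q D n)) : Subsingleton (Ext Q B n) := by
  refine subsingleton_of_forall_eq 0 fun x => ?_
  obtain ⟨y, rfl⟩ := Ext.covariant_sequence_exact₂ Q h.2 x (Subsingleton.elim _ _)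
  rw [Subsingleton.elim y 0, Ext.zero_comp]

lemma IsSES.subsingleton_ext_covariant₃ (h : IsSES f g) (hB : Subsingleton (Ext Q B n))
    (hA : Subsingleton (Ext Q A (n + 1))) : Subsingleton (Ext Q D n) := by
  refine subsingleton_of_forall_eq 0 fun x => ?_
  obtain ⟨y, rfl⟩ := Ext.covariant_sequence_exact₃ Q h.2 x rfl (Subsingleton.elim _ _)
  rw [Subsingleton.elim y 0, Ext.zero_comp]

lemma IsSES.exists_extension (h : IsSES f g) (hD : Subsingleton (Ext D Q 1)) (x : A ⟶ Q) :
    ∃ y : B ⟶ Q, f ≫ y = x := by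
  obtain ⟨y, hy⟩ := Ext.contravariant_sequence_exact₁ h.2 Q (Ext.mk₀ x) (add_zero 1)
    (Subsingleton.elim _ _)
  obtain ⟨y, rfl⟩ := (Ext.mk₀_bijective _ _).2 y
  refine ⟨y, (Ext.mk₀_bijective _ _).1 ?_⟩
  rw [← hy, Ext.mk₀_comp_mk₀]

lemma IsSES.subsingleton_ext_one (h : IsSES f g) (hB : Subsingleton (Ext B Q 1))
    (hx : ∀ x : A ⟶ Q, ∃ y : B ⟶ Q, f ≫ y = x) : Subsingleton (Ext D Q 1) := by
  refine subsingleton_of_forall_eq 0 fun x => ?_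
  obtain ⟨z, rfl⟩ := Ext.contravariant_sequence_exact₃ h.2 Q x (Subsingleton.elim _ _) (add_zero 1)
  obtain ⟨z, rfl⟩ := (Ext.mk₀_bijective _ _).2 z
  obtain ⟨y, rfl⟩ := hx z
  rw [← Ext.mk₀_comp_mk₀]
  exact h.2.extClass_comp_assoc _

lemma IsSES.exists_swap (h : IsSES f g) (hext : Subsingleton (Ext D A 1)) :
    ∃ (s : D ⟶ B) (r : B ⟶ A), IsSES s r := by
  obtain ⟨r, hr⟩ := h.exists_extension hext (𝟙 A)
  obtain ⟨s, hs, -⟩ := h.exists_swap_of_retraction r hr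
  exact ⟨s, r, hs⟩

/-- The class `⊥W` of objects `M` with `Extⁱ(M, Q) = 0` for all `i ≥ 1` and `Q ∈ W`, the
counterpart of `rightPerp`. -/
def LeftPerp (W : C → Prop) (M : C) : Prop :=
  ∀ Q, W Q → ∀ i : ℕ, 1 ≤ i → Subsingleton (Ext M Q i)

variable {W : C → Prop}

lemma leftPerp_antitone : Antitone (LeftPerp : (C → Prop) → C → Prop) :=
  fun _ _ hle _ hM Q hQ => hM Q (hle Q hQ)

lemma LeftPerp.of_retract {M N : C} (r : Retract M N) (hN : LeftPerp W N) : LeftPerp W M :=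
  fun Q hQ i hi => subsingleton_ext_of_retract_left r (hN Q hQ i hi)

variable (W) in
lemma extClosed_leftPerp : ExtClosed (LeftPerp W) :=
  fun _ _ _ _ _ h hA hD Q hQ i hi =>
    h.subsingleton_ext_contravariant₂ (hA Q hQ i hi) (hD Q hQ i hi)

variable (W) in
lemma kerEpiClosed_leftPerp : KerEpiClosed (LeftPerp W) :=
  fun _ _ _ _ _ h hB hD Q hQ i hi =>
    h.subsingleton_ext_contravariant₁ (hB Q hQ i hi) (hD Q hQ (i + 1) (by lia))

/-- Dimension shifting runs to the left along the chain, so it does not need to terminate. -/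
lemma leftPerp_of_chain {Z P : ℤ → C} {f : ∀ n, Z n ⟶ P n} {g : ∀ n, P n ⟶ Z (n + 1)}
    (h : ∀ n, IsSES (f n) (g n)) (hP : ∀ n, LeftPerp W (P n))
    (hf : ∀ Q, W Q → ∀ n (x : Z n ⟶ Q), ∃ y : P n ⟶ Q, f n ≫ y = x) (n : ℤ) :
    LeftPerp W (Z n) := by
  intro Q hQ i hi
  induction i, hi using Nat.le_induction generalizing n with
  | base =>
    obtain ⟨m, rfl⟩ : ∃ m, n = m + 1 := ⟨n - 1, by ring⟩
    exact (h m).subsingleton_ext_one (hP m Q hQ 1 le_rfl) (hf Q hQ m)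
  | succ i _ ih =>
    obtain ⟨m, rfl⟩ : ∃ m, n = m + 1 := ⟨n - 1, by ring⟩
    exact (h m).subsingleton_ext_contravariant₃ (ih m) (hP m Q hQ (i + 1) (by lia))

end Ext

/-! ### The class `G(X)` coinductively -/

section Gorenstein

/-- `N'` is a cosyzygy of `N` with respect to `X`: the cokernel of an embedding of `N` in an object
of `X`. -/
def IsCosyzygy (X : C → Prop) (N N' : C) : Prop :=
  ∃ (E : C) (f : N ⟶ E) (g : E ⟶ N'), IsSES f g ∧ X E

/-- Coinductive form of `G(X)`: the largest class of objects left orthogonal to `W` each of which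
has an `X`-cosyzygy in the class. It is encoded as the union of all classes `S` with this
property. -/
def IsGorenstein (X W : C → Prop) (M : C) : Prop :=
  ∃ S : C → Prop, S M ∧ ∀ N, S N → LeftPerp W N ∧ ∃ N', IsCosyzygy X N N' ∧ S N'

variable {X W : C → Prop} {M N : C}

lemma IsGorenstein.leftPerp (hM : IsGorenstein X W M) : LeftPerp W M := by
  obtain ⟨S, hSM, hS⟩ := hM
  exact (hS M hSM).1

lemma IsGorenstein.exists_cosyzygy (hM : IsGorenstein X W M) :
    ∃ N, IsCosyzygy X M N ∧ IsGorenstein X W N := by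
  obtain ⟨S, hSM, hS⟩ := hM
  obtain ⟨N, hMN, hSN⟩ := (hS M hSM).2
  exact ⟨N, hMN, S, hSN, hS⟩

lemma IsGorenstein.of_cosyzygy (hM : LeftPerp W M) (hMN : IsCosyzygy X M N)
    (hN : IsGorenstein X W N) : IsGorenstein X W M := by
  refine ⟨fun K => IsGorenstein X W K ∨ K = M, Or.inr rfl, ?_⟩
  rintro K (hK | rfl)
  · obtain ⟨K', hKK', hK'⟩ := hK.exists_cosyzygy
    exact ⟨hK.leftPerp, K', hKK', Or.inl hK'⟩
  · exact ⟨hM, N, hMN, Or.inl hN⟩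

lemma GClass.isGorenstein (hXW : X ≤ LeftPerp W) (hM : GClass X W M) : IsGorenstein X W M := by
  obtain ⟨P, d, hd, hP, hex, ⟨e⟩, hW⟩ := hM
  have hses (n : ℤ) := isSES_kernel_lift (hd n) (hex n)
  have hext (Q : C) (hQ : W Q) (n : ℤ) (x : kernel (d n) ⟶ Q) :
      ∃ y : P n ⟶ Q, kernel.ι (d n) ≫ y = x := by
    obtain ⟨m, rfl⟩ : ∃ m, n = m + 1 + 1 := ⟨n - 2, by ring⟩
    have := (hses (m + 1)).epi
    let g := kernel.lift (d (m + 1 + 1)) (d (m + 1)) (hd (m + 1))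
    have hdg : d m ≫ g = 0 := by simp [g, ← cancel_mono (kernel.ι _), hd]
    obtain ⟨y, hy⟩ := hW Q hQ m (g ≫ x) (by rw [← Category.assoc, hdg, zero_comp])
    refine ⟨y, ?_⟩
    rw [← cancel_epi g, ← hy, kernel.lift_ι_assoc]
  have hperp := leftPerp_of_chain hses (fun n => hXW _ (hP n)) hext
  refine ⟨fun N => ∃ n, Nonempty (N ≅ kernel (d n)), ⟨0, ⟨e⟩⟩, ?_⟩
  rintro N ⟨n, ⟨i⟩⟩
  exact ⟨(hperp n).of_retract i.retract, kernel (d (n + 1)),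
    ⟨P n, _, _, (hses n).of_iso_left i, hP n⟩, n + 1, ⟨Iso.refl _⟩⟩

lemma gClass_of_chain {Z : ℤ → C} (hZ : ∀ n, LeftPerp W (Z n))
    (hZX : ∀ n, IsCosyzygy X (Z n) (Z (n + 1))) : GClass X W (Z 0) := by
  choose P f g hfg hP using hZX
  have := fun n => (hfg n).mono
  have := fun n => (hfg n).epi
  have hd : ∀ n, (g n ≫ f (n + 1)) ≫ g (n + 1) ≫ f (n + 1 + 1) = 0 := fun n => by
    rw [Category.assoc, reassoc_of% (hfg (n + 1)).zero, zero_comp, comp_zero]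
  refine ⟨P, fun n => g n ≫ f (n + 1), hd, hP, fun n => exact_splice (hfg (n + 1)) (hd n), ?_, ?_⟩
  · exact ⟨IsLimit.conePointUniqueUpToIso (hfg 0).2.fIsKernel (kernelIsKernel (g 0)) ≪≫
      (kernelCompMono (g 0) (f (0 + 1))).symm⟩
  · intro Q hQ n ψ hψ
    have hfψ : f (n + 1) ≫ ψ = 0 := by
      rwa [← cancel_epi (g n), comp_zero, ← Category.assoc]
    obtain ⟨χ, rfl⟩ := (hfg (n + 1)).exists_desc ψ hfψ
    obtain ⟨φ, rfl⟩ := (hfg (n + 1 + 1)).exists_extension (hZ _ Q hQ 1 le_rfl) χ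
    exact ⟨φ, Category.assoc _ _ _⟩

lemma exists_int_chain {α : Type*} {R : α → α → Prop} (hr : ∀ a, ∃ b, R a b)
    (hl : ∀ a, ∃ b, R b a) (a : α) : ∃ Z : ℤ → α, Z 0 = a ∧ ∀ n, R (Z n) (Z (n + 1)) := by
  choose r hr using hr
  choose l hl using hl
  let Z : ℤ → α
    | .ofNat n => r^[n] a
    | .negSucc n => l^[n + 1] a
  refine ⟨Z, rfl, ?_⟩
  rintro (n | _ | n)
  · change R (r^[n] a) (r^[n + 1] a)
    rw [Function.iterate_succ_apply']
    exact hr _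
  · exact hl a
  · change R (l^[n + 2] a) (l^[n + 1] a)
    rw [Function.iterate_succ_apply' l (n + 1)]
    exact hl _

theorem gClass_eq_isGorenstein (hXW : X ≤ LeftPerp W) (hX : ∀ M, ∃ K, IsCosyzygy X K M) :
    GClass X W = IsGorenstein X W := by
  ext M
  refine ⟨GClass.isGorenstein hXW, fun hM => ?_⟩
  have exists_syzygy (N : C) (hN : IsGorenstein X W N) :
      ∃ K, IsCosyzygy X K N ∧ IsGorenstein X W K := by
    obtain ⟨K, E, f, g, hfg, hE⟩ := hX N
    have hKN : IsCosyzygy X K N := ⟨E, f, g, hfg, hE⟩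
    exact ⟨K, hKN, .of_cosyzygy (kerEpiClosed_leftPerp W f g hfg (hXW E hE) hN.leftPerp) hKN hN⟩
  obtain ⟨Z, hZ₀, hZ⟩ := exists_int_chain (α := {N // IsGorenstein X W N})
    (R := fun N N' => IsCosyzygy X N.1 N'.1)
    (fun N => by simpa [and_comm] using N.2.exists_cosyzygy)
    (fun N => by simpa [and_comm] using exists_syzygy N.1 N.2) ⟨M, hM⟩
  have hG : GClass X W (Z 0).1 := gClass_of_chain (fun n => (Z n).2.leftPerp) hZ
  rwa [hZ₀] at hG

end Gorenstein

/-! ### Closure properties of `G(X)` -/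

section Closure

variable {X W : C → Prop} (hXW : X ≤ LeftPerp W) (hXext : ExtClosed X)

include hXW hXext

lemma IsGorenstein.of_isSES {Z L E : C} {f : Z ⟶ L} {g : L ⟶ E} (h : IsSES f g)
    (hZ : IsGorenstein X W Z) (hE : X E) : IsGorenstein X W L := by
  obtain ⟨Z', ⟨P, i, p, hip, hP⟩, hZ'⟩ := hZ.exists_cosyzygy
  have sq := IsPushout.of_hasPushout f i
  obtain ⟨q, hq⟩ := h.cobaseChange sq
  obtain ⟨r, hr⟩ := hip.cobaseChange sq.flip
  exact .of_cosyzygy (extClosed_leftPerp W f g h hZ.leftPerp (hXW E hE))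
    ⟨_, _, r, hr, hXext _ q hq hP hE⟩ hZ'

variable (hW : IsCogenerator W X)

include hW

theorem IsCogenerator.isGorenstein : IsCogenerator W (IsGorenstein X W) := by
  refine ⟨fun M hM => ⟨X, hW.1 M hM, fun N hN => ⟨hXW N hN, ?_⟩⟩, fun M hM => ?_⟩
  · obtain ⟨I, N', f, g, hfg, hI, hN'⟩ := hW.2 N hN
    exact ⟨N', ⟨I, f, g, hfg, hW.1 I hI⟩, hN'⟩
  · obtain ⟨Z, ⟨P, i, p, hip, hP⟩, hZ⟩ := hM.exists_cosyzygy
    obtain ⟨I, E, f, g, hfg, hI, hE⟩ := hW.2 P hP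
    obtain ⟨L, r, s, t, hr, hst⟩ := hip.exists_comp hfg
    exact ⟨I, L, _, r, hr, hI, .of_isSES hXW hXext hst hZ hE⟩

theorem extClosed_isGorenstein : ExtClosed (IsGorenstein X W) := by
  intro A B D f g h hA hD
  refine ⟨fun B => ∃ (A D : C) (f : A ⟶ B) (g : B ⟶ D),
    IsSES f g ∧ IsGorenstein X W A ∧ IsGorenstein X W D, ⟨A, D, f, g, h, hA, hD⟩, ?_⟩
  rintro B ⟨A, D, f, g, h, hA, hD⟩
  refine ⟨extClosed_leftPerp W f g h hA.leftPerp hD.leftPerp, ?_⟩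
  obtain ⟨I, A', i, p, hip, hI, hA'⟩ := (hW.isGorenstein hXW hXext).2 A hA
  have sq := IsPushout.of_hasPushout f i
  obtain ⟨q, hq⟩ := h.cobaseChange sq
  obtain ⟨r, hr⟩ := hip.cobaseChange sq.flip
  obtain ⟨s, t, hst⟩ := hq.exists_swap (hD.leftPerp I hI 1 le_rfl)
  have hP : IsGorenstein X W (pushout f i) := .of_isSES hXW hXext hst hD (hW.1 I hI)
  obtain ⟨Z, ⟨E, j, c, hjc, hE⟩, hZ⟩ := hP.exists_cosyzygy
  obtain ⟨K, k, a, b, hk, hab⟩ := hr.exists_comp hjc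
  exact ⟨K, ⟨E, _, k, hk, hE⟩, A', Z, a, b, hab, hA', hZ⟩

theorem kerEpiClosed_isGorenstein : KerEpiClosed (IsGorenstein X W) := by
  intro A B D f g h hB hD
  obtain ⟨B', ⟨E, i, p, hip, hE⟩, hB'⟩ := hB.exists_cosyzygy
  obtain ⟨K, r, s, t, hr, hst⟩ := h.exists_comp hip
  exact .of_cosyzygy (kerEpiClosed_leftPerp W f g h hB.leftPerp hD.leftPerp) ⟨E, _, r, hr, hE⟩
    (extClosed_isGorenstein hXW hXext hW s t hst hD hB')

theorem IsGorenstein.of_retract {M N : C} (ρ : Retract M N) (hN : IsGorenstein X W N) :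
    IsGorenstein X W M := by
  refine ⟨fun M => ∃ N, Nonempty (Retract M N) ∧ IsGorenstein X W N, ⟨N, ⟨ρ⟩, hN⟩, ?_⟩
  rintro M ⟨N, ⟨ρ⟩, hN⟩
  refine ⟨hN.leftPerp.of_retract ρ, ?_⟩
  obtain ⟨L, ⟨I, j, c, hjc, hI⟩, hL⟩ := hN.exists_cosyzygy
  have hM := isSES_cokernel ρ.i
  obtain ⟨k, -, hk⟩ := hM.exists_swap_of_retraction ρ.r ρ.retract
  obtain ⟨E, e, s, t, he, hst⟩ := hM.exists_comp hjc
  have sq := IsPushout.of_hasPushout s k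
  obtain ⟨q, hq⟩ := hst.cobaseChange sq
  have hP := extClosed_isGorenstein hXW hXext hW _ q hq hN hL
  -- `s` factors through the split monomorphism `k`, so its pushout is a retract
  have hsk : s ≫ 𝟙 E = k ≫ cokernel.π ρ.i ≫ s := by rw [reassoc_of% hk, Category.comp_id]
  exact ⟨E, ⟨I, _, e, he, hI⟩, _, ⟨⟨_, sq.desc (𝟙 E) _ hsk, sq.inl_desc _ _ _⟩⟩, hP⟩

end Closure

/-! ### Cotorsion pairs -/

section CotorsionPair

/-- A cotorsion pair `(X, Y)` in `C`: each class is the `Ext¹`-orthogonal of the other. -/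
structure IsCotorsionPair (X Y : C → Prop) : Prop where
  left_iff : ∀ M, X M ↔ ∀ N, Y N → Subsingleton (Ext M N 1)
  right_iff : ∀ N, Y N ↔ ∀ M, X M → Subsingleton (Ext M N 1)

/-- Completeness of a cotorsion pair `(X, Y)`: every object has a special `X`-precover and a
special `Y`-preenvelope. -/
structure IsComplete (X Y : C → Prop) : Prop where
  exists_precover : ∀ M : C, ∃ (Y₀ X₀ : C) (f : Y₀ ⟶ X₀) (g : X₀ ⟶ M), IsSES f g ∧ X X₀ ∧ Y Y₀
  exists_preenvelope : ∀ M : C, ∃ (Y₀ X₀ : C) (f : M ⟶ Y₀) (g : Y₀ ⟶ X₀),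
    IsSES f g ∧ X X₀ ∧ Y Y₀

namespace IsCotorsionPair

variable {X Y : C → Prop} (hXY : IsCotorsionPair X Y)

include hXY

lemma extClosed_left : ExtClosed X := fun A B D _ _ h hA hD =>
  (hXY.left_iff B).2 fun N hN => h.subsingleton_ext_contravariant₂
    ((hXY.left_iff A).1 hA N hN) ((hXY.left_iff D).1 hD N hN)

lemma extClosed_right : ExtClosed Y := fun A B D _ _ h hA hD =>
  (hXY.right_iff B).2 fun M hM => h.subsingleton_ext_covariant₂
    ((hXY.right_iff A).1 hA M hM) ((hXY.right_iff D).1 hD M hM)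

lemma left_of_retract {A M : C} (r : Retract A M) (hM : X M) : X A :=
  (hXY.left_iff A).2 fun N hN => subsingleton_ext_of_retract_left r ((hXY.left_iff M).1 hM N hN)

lemma right_of_retract {A N : C} (r : Retract A N) (hN : Y N) : Y A :=
  (hXY.right_iff A).2 fun M hM => subsingleton_ext_of_retract_right r ((hXY.right_iff N).1 hN M hM)

lemma right_of_isSES (hh : X ≤ LeftPerp Y) {A B D : C} {f : A ⟶ B} {g : B ⟶ D} (h : IsSES f g)
    (hA : Y A) (hB : Y B) : Y D :=
  (hXY.right_iff D).2 fun M hM => h.subsingleton_ext_covariant₃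
    ((hXY.right_iff B).1 hB M hM) (hh M hM A hA 2 one_le_two)

lemma isCogenerator_inf (hc : IsComplete X Y) : IsCogenerator (X ⊓ Y) X := by
  refine ⟨fun M hM => hM.1, fun M hM => ?_⟩
  obtain ⟨Y₀, X₀, f, g, hfg, hX₀, hY₀⟩ := hc.exists_preenvelope M
  exact ⟨Y₀, X₀, f, g, hfg, ⟨hXY.extClosed_left f g hfg hM hX₀, hY₀⟩, hX₀⟩

variable (hc : IsComplete X Y) (hh : X ≤ LeftPerp Y)

include hc hh

lemma isCogenerator_isGorenstein_inf :
    IsCogenerator (X ⊓ Y) (IsGorenstein X (X ⊓ Y) ⊓ Y) := by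
  have hG := (hXY.isCogenerator_inf hc).isGorenstein (hh.trans (leftPerp_antitone inf_le_right))
    hXY.extClosed_left
  refine ⟨fun M hM => ⟨hG.1 M hM, hM.2⟩, fun M hM => ?_⟩
  obtain ⟨I, N, f, g, hfg, hI, hN⟩ := hG.2 M hM.1
  exact ⟨I, N, f, g, hfg, hI, hN, hXY.right_of_isSES hh hfg hM.2 hI.2⟩

lemma isGenerator_isGorenstein_inf : IsGenerator (X ⊓ Y) (IsGorenstein X (X ⊓ Y) ⊓ Y) := by
  have hXW : X ≤ LeftPerp (X ⊓ Y) := hh.trans (leftPerp_antitone inf_le_right)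
  have hW := hXY.isCogenerator_inf hc
  have hG := hXY.isCogenerator_isGorenstein_inf hc hh
  refine ⟨hG.1, fun M hM => ?_⟩
  obtain ⟨Y₀, X₀, f, g, hfg, hX₀, hY₀⟩ := hc.exists_precover M
  have hX₀W : (X ⊓ Y) X₀ := ⟨hX₀, hXY.extClosed_right f g hfg hY₀ hM.2⟩
  exact ⟨Y₀, X₀, f, g, hfg, hX₀W,
    kerEpiClosed_isGorenstein hXW hXY.extClosed_left hW f g hfg (hG.1 X₀ hX₀W).1 hM.1, hY₀⟩

end IsCotorsionPair

end CotorsionPair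

theorem statement11_general {X Y : C → Prop} (hXY : IsCotorsionPair X Y) (hc : IsComplete X Y)
    (hh : X ≤ LeftPerp Y) (hYker : KerEpiClosed Y) :
    StrongLeftFrobenius (GClass X (X ⊓ Y) ⊓ Y) (X ⊓ Y) := by
  have hXW : X ≤ LeftPerp (X ⊓ Y) := hh.trans (leftPerp_antitone inf_le_right)
  have hXext := hXY.extClosed_left
  have hW := hXY.isCogenerator_inf hc
  have hcogen := hXY.isCogenerator_isGorenstein_inf hc hh
  have hext := (extClosed_isGorenstein hXW hXext hW).inf hXY.extClosed_right
  have hne : ∃ M, (X ⊓ Y) M := by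
    obtain ⟨-, X₀, -, -, -, hX₀, -⟩ := hc.exists_precover 0
    obtain ⟨I, -, -, -, -, hI, -⟩ := hW.2 X₀ hX₀
    exact ⟨I, hI⟩
  rw [gClass_eq_isGorenstein hXW fun M => ?_]
  · exact {
      subX := isSubcat_of_extClosed (hne.imp hcogen.1) hext fun r hM =>
        ⟨hM.1.of_retract hXW hXext hW r, hXY.right_of_retract r hM.2⟩
      subW := isSubcat_of_extClosed hne (hXext.inf hXY.extClosed_right) fun r hM =>
        ⟨hXY.left_of_retract r hM.1, hXY.right_of_retract r hM.2⟩
      extClosed := hext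
      kerEpiClosed := (kerEpiClosed_isGorenstein hXW hXext hW).inf hYker
      cogen := hcogen
      perp := fun Q hQ M hM => hM.1.leftPerp Q hQ
      gen := hXY.isGenerator_isGorenstein_inf hc hh
      proj := fun M N hM hN => hh M hM.1 N hN.2 }
  · obtain ⟨K, E, f, g, hfg, hE, -⟩ := hc.exists_precover M
    exact ⟨K, E, f, g, hfg, hE⟩

/-- If `(X, Y)` is a complete hereditary cotorsion pair in an abelian
category with `Y` closed under kernels of epimorphisms, then `(G(X) ∩ Y, X ∩ Y)` is a strong
left Frobenius pair. -/
theorem statement11 {C : Type u} [Category.{v} C] [Abelian C]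
    [EnoughProjectives C] [EnoughInjectives C] [HasExt.{w} C]
    (X Y : C → Prop)
    (hX : ∀ M, X M ↔ ∀ N, Y N → Subsingleton (Abelian.Ext M N 1))
    (hY : ∀ N, Y N ↔ ∀ M, X M → Subsingleton (Abelian.Ext M N 1))
    (hres : ∀ M : C, ∃ (Y₀ X₀ : C) (f : Y₀ ⟶ X₀) (g : X₀ ⟶ M), IsSES f g ∧ X X₀ ∧ Y Y₀)
    (hcores : ∀ M : C, ∃ (Y₀ X₀ : C) (f : M ⟶ Y₀) (g : Y₀ ⟶ X₀), IsSES f g ∧ X X₀ ∧ Y Y₀)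
    (hhered : ∀ M N, X M → Y N → ∀ i : ℕ, 1 ≤ i → Subsingleton (Abelian.Ext M N i))
    (hYker : KerEpiClosed Y) :
    StrongLeftFrobenius
      (fun M => GClass X (fun Q => X Q ∧ Y Q) M ∧ Y M)
      (fun M => X M ∧ Y M) :=
  statement11_general ⟨hX, hY⟩ ⟨hres, hcores⟩ (fun M hM N hN => hhered M N hM hN) hYker

end FrobeniusPaper
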